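/- Let H be a well-formed complete history and let lt assign to each event of H a key (logical time, process identifier) ∈ ℕ × ℕ, where the process identifier component equals the process at which the event occurs, such that distinct events receive distinct keys and, within each process subhistory H|p, the logical-time components are strictly increasing along the subhistory. Let H^lt be the sequence consisting of the same events as H, sorted in increasing lexicographic order of their keys. If for every register x the register subhistory H^lt|x is linearizable, then H is sequentially consistent. -/

import Mathlib

/-- An event of a read/write register operation execution: it is either the
invocation (`isInv = true`) or the response (`isInv = false`) of an operation,
identified by an operation identifier `op`, occurring at process `proc`,
targeting register `reg`.  `isRead` tells whether the operation is a read or a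
write, and `value` is the value written (for a write) resp. returned (for a
read). -/
structure Event where
  op : ℕ
  proc : ℕ
  reg : ℕ
  isRead : Bool
  value : ℤ
  isInv : Bool
deriving DecidableEq

/-- A history is a finite sequence of events. -/
abbrev Hist := List Event

/-- `H|p`: the process subhistory of `H`, i.e. the subsequence of events
occurring at process `p`. -/
def procSub (H : Hist) (p : ℕ) : Hist := H.filter (fun e => e.proc = p)

/-- `H|x`: the register subhistory of `H`, i.e. the subsequence of events of
operations targeting register `x`. -/
def regSub (H : Hist) (x : ℕ) : Hist := H.filter (fun e => e.reg = x)

/-- `e2` is the response event matching the invocation event `e1`. -/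
def Matches (e1 e2 : Event) : Prop :=
  e1.isInv = true ∧ e2.isInv = false ∧ e1.op = e2.op ∧ e1.proc = e2.proc ∧
    e1.reg = e2.reg ∧ e1.isRead = e2.isRead ∧ e1.value = e2.value

/-- A history is sequential if its first event is an invocation and every
invocation event (except possibly the last event) is immediately followed by
the matching response event. -/
inductive IsSequential : Hist → Prop
  | nil : IsSequential []
  | single (e : Event) : e.isInv = true → IsSequential [e]
  | cons (e1 e2 : Event) (rest : Hist) :
      Matches e1 e2 → IsSequential rest → IsSequential (e1 :: e2 :: rest)

/-- No two distinct events of a history are the invocation of the same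
operation, nor the response of the same operation. -/
def UniqueEvents (H : Hist) : Prop :=
  H.Pairwise (fun e1 e2 => ¬(e1.op = e2.op ∧ e1.isInv = e2.isInv))

/-- All events of one and the same operation agree on the process, register,
operation type and value. -/
def Coherent (H : Hist) : Prop :=
  ∀ e1 ∈ H, ∀ e2 ∈ H, e1.op = e2.op →
    e1.proc = e2.proc ∧ e1.reg = e2.reg ∧ e1.isRead = e2.isRead ∧ e1.value = e2.value

/-- A history is well-formed if every process subhistory is sequential
(together with the bookkeeping conditions making operations well-defined). -/
def WellFormed (H : Hist) : Prop :=
  UniqueEvents H ∧ Coherent H ∧ ∀ p : ℕ, IsSequential (procSub H p)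

/-- A history is complete if every invocation event has a matching response
event. -/
def Complete (H : Hist) : Prop :=
  ∀ e ∈ H, e.isInv = true → ∃ e' ∈ H, Matches e e'

/-- `H ≃ H'`: two histories are equivalent iff `H|p = H'|p` for every
process `p`. -/
def HEquiv (H H' : Hist) : Prop := ∀ p : ℕ, procSub H p = procSub H' p

/-- Operation `o1` precedes operation `o2` in history `H`
(`o1 <_H o2`): the response event of `o1` occurs before the invocation event
of `o2` in `H`. -/
def OpBefore (H : Hist) (o1 o2 : ℕ) : Prop :=
  ∃ i j : Fin H.length, i < j ∧
    (H.get i).op = o1 ∧ (H.get i).isInv = false ∧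
    (H.get j).op = o2 ∧ (H.get j).isInv = true

/-- A sequential history is legal if every read of a register returns the
value written by the closest preceding write to that register, or the initial
value `0` if no such write exists. -/
def Legal (S : Hist) : Prop :=
  ∀ k : Fin S.length, (S.get k).isInv = true → (S.get k).isRead = true →
    ((∃ j : Fin S.length, j < k ∧ (S.get j).isInv = true ∧ (S.get j).isRead = false ∧
        (S.get j).reg = (S.get k).reg ∧ (S.get j).value = (S.get k).value ∧
        ∀ l : Fin S.length, j < l → l < k → (S.get l).isInv = true →
          (S.get l).isRead = false → (S.get l).reg ≠ (S.get k).reg) ∨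
      ((S.get k).value = 0 ∧
        ∀ j : Fin S.length, j < k → (S.get j).isInv = true →
          (S.get j).isRead = false → (S.get j).reg ≠ (S.get k).reg))

/-- `SC H`: history `H` is sequentially consistent iff there is a legal
sequential history `S` with `S ≃ H`. -/
def SC (H : Hist) : Prop :=
  ∃ S : Hist, IsSequential S ∧ Legal S ∧ HEquiv S H

/-- `LIN H`: history `H` is linearizable iff there is a legal sequential
history `S` with `S ≃ H` such that `o1 <_H o2` implies `o1 <_S o2` for all
operations `o1, o2` of `H`. -/
def LIN (H : Hist) : Prop :=
  ∃ S : Hist, IsSequential S ∧ Legal S ∧ HEquiv S H ∧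
    ∀ o1 o2 : ℕ, OpBefore H o1 o2 → OpBefore S o1 o2

/-- The lexicographic order on keys `(logical time, process identifier)`. -/
def KeyLt (k1 k2 : ℕ × ℕ) : Prop := Prod.Lex (· < ·) (· < ·) k1 k2

/-- `IsLtHistory H lt Hlt`: `Hlt` is the logical-time history `H^lt`
corresponding to `H`, i.e. the sequence consisting of the same events as `H`,
sorted in increasing lexicographic order of their keys
`lt e = (logical time of e, process identifier of e)`. -/
def IsLtHistory (H : Hist) (lt : Event → ℕ × ℕ) (Hlt : Hist) : Prop :=
  Hlt.Perm H ∧ Hlt.Pairwise (fun e1 e2 => KeyLt (lt e1) (lt e2))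


/-- Legality phrased through splittings of the list. -/
def LegalSplit (S : Hist) : Prop :=
  ∀ pre k post, S = pre ++ k :: post → k.isInv = true → k.isRead = true →
    ((∃ p1 j p2, pre = p1 ++ j :: p2 ∧ j.isInv = true ∧ j.isRead = false ∧ j.reg = k.reg ∧
        j.value = k.value ∧ ∀ l ∈ p2, l.isInv = true → l.isRead = false → l.reg ≠ k.reg) ∨
      (k.value = 0 ∧ ∀ j ∈ pre, j.isInv = true → j.isRead = false → j.reg ≠ k.reg))

theorem legal_to_split {S : Hist} (h : Legal S) : LegalSplit S := by
  intro pre k post hS hk1 hk2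
  subst hS
  have hlen : pre.length < (pre ++ k :: post).length := by simp
  have hg : (pre ++ k :: post).get ⟨pre.length, hlen⟩ = k := by simp
  have := h ⟨pre.length, hlen⟩ (by rw [hg]; exact hk1) (by rw [hg]; exact hk2)
  rw [hg] at this
  have key : ∀ (i : ℕ) (hi : i < pre.length),
      (pre ++ k :: post).get ⟨i, hi.trans hlen⟩ = pre[i] := by
    intro i hi
    simp [List.getElem_append_left hi]
  rcases this with ⟨⟨j, hj⟩, hjk, h1, h2, h3, h4, h5⟩ | ⟨h1, h2⟩
  · left
    have hj' : j < pre.length := hjk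
    rw [key j hj'] at h1 h2 h3 h4
    refine ⟨pre.take j, pre[j], pre.drop (j+1), ?_, h1, h2, h3, h4, ?_⟩
    · simp
    · intro l hl
      obtain ⟨n, hn, rfl⟩ := List.mem_iff_getElem.1 hl
      simp only [List.length_drop] at hn
      have hn' : j + 1 + n < pre.length := by omega
      have := h5 ⟨j+1+n, hn'.trans hlen⟩ (by simp [Fin.lt_def]; omega) (by simpa [Fin.lt_def] using hn')
      rw [key _ hn'] at this
      simpa [List.getElem_drop] using this
  · right
    refine ⟨h1, ?_⟩
    intro l hl
    obtain ⟨n, hn, rfl⟩ := List.mem_iff_getElem.1 hl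
    have := h2 ⟨n, hn.trans hlen⟩ (by simpa [Fin.lt_def] using hn)
    rwa [key _ hn] at this

theorem split_to_legal {S : Hist} (h : LegalSplit S) : Legal S := by
  rintro ⟨k, hk⟩ hk1 hk2
  have hS : S = S.take k ++ S[k] :: S.drop (k+1) := by simp
  rcases h _ _ _ hS hk1 hk2 with ⟨p1, j, p2, hp, h1, h2, h3, h4, h5⟩ | ⟨h1, h2⟩
  · left
    have hl : (S.take k).length = k := by simp; omega
    rw [hp] at hl
    simp only [List.length_append, List.length_cons] at hl
    have hget : ∀ i (hi : i < k), S[i] = (p1 ++ j :: p2)[i]'(by simp; omega) := by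
      intro i hi
      simp [← hp]
    have hj : S[p1.length]'(by omega) = j := by
      rw [hget _ (by omega)]; simp
    refine ⟨⟨p1.length, by omega⟩, by simp [Fin.lt_def]; omega, ?_⟩
    simp only [List.get_eq_getElem, hj]
    refine ⟨h1, h2, h3, h4, ?_⟩
    rintro ⟨l, hlS⟩ hjl hlk
    simp only [Fin.lt_def] at hjl hlk
    apply h5
    show S[l] ∈ p2
    rw [hget _ hlk, List.getElem_append_right (by omega)]
    obtain ⟨n, hn⟩ : ∃ n, l - p1.length = n + 1 := ⟨l - p1.length - 1, by omega⟩
    simp [hn]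
  · right
    refine ⟨h1, ?_⟩
    rintro ⟨l, hlS⟩ hlk
    simp only [Fin.lt_def] at hlk
    apply h2
    show S[l] ∈ S.take k
    rw [List.mem_take_iff_getElem]
    exact ⟨l, by omega, rfl⟩

theorem legal_of_regSub {S : Hist} (h : ∀ x, Legal (regSub S x)) : Legal S := by
  apply split_to_legal
  intro pre k post hS hk1 hk2
  have := legal_to_split (h k.reg) (regSub pre k.reg) k (regSub post k.reg)
    (by subst hS; simp [regSub]) hk1 hk2
  rcases this with ⟨p1, j, p2, hp, h1, h2, h3, h4, h5⟩ | ⟨h1, h2⟩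
  · left
    unfold regSub at hp
    obtain ⟨q1, q2, rfl, hq1, hq2⟩ := List.filter_eq_append_iff.1 hp
    obtain ⟨r1, r2, rfl, hr1, hr2, hr3⟩ := List.filter_eq_cons_iff.1 hq2
    refine ⟨q1 ++ r1, j, r2, by simp, h1, h2, h3, h4, ?_⟩
    intro l hl hl1 hl2 hl3
    refine h5 l ?_ hl1 hl2 hl3
    rw [← hr3]
    simp [hl, hl3]
  · right
    refine ⟨h1, ?_⟩
    intro l hl hl1 hl2 hl3
    exact h2 l (by simp [regSub, hl, hl3]) hl1 hl2 hl3

theorem perm_of_procSub {S H : Hist} (h : ∀ p, (procSub S p).Perm (procSub H p)) : S.Perm H := by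
  rw [List.perm_iff_count]
  intro e
  have := (h e.proc).count_eq e
  unfold procSub at this
  rwa [List.count_filter (by simp), List.count_filter (by simp)] at this

theorem perm_of_regSub {S H : Hist} (h : ∀ p, (regSub S p).Perm (regSub H p)) : S.Perm H := by
  rw [List.perm_iff_count]
  intro e
  have := (h e.reg).count_eq e
  unfold regSub at this
  rwa [List.count_filter (by simp), List.count_filter (by simp)] at this

theorem Matches.inj_left {a a' b : Event} (h : Matches a b) (h' : Matches a' b) : a = a' := by
  cases a; cases a'; cases b
  simp only [Matches] at h h'
  simp; grind

theorem Matches.inj_right {a b b' : Event} (h : Matches a b) (h' : Matches a b') : b = b' := by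
  cases a; cases b'; cases b
  simp only [Matches] at h h'
  simp; grind

/-- The two events of an operation. -/
def pairEv (t : Event × Event) : Hist := [t.1, t.2]

theorem pairs_of_sequential {S : Hist} (hs : IsSequential S) (hn : S.Nodup) (hc : Complete S) :
    ∃ P : List (Event × Event), S = P.flatMap pairEv ∧ ∀ t ∈ P, Matches t.1 t.2 := by
  induction hs with
  | nil => exact ⟨[], by simp, by simp⟩
  | single e he =>
    obtain ⟨e', he', hm⟩ := hc e (by simp) he
    simp at he'
    subst he'
    have := hm.2.1
    simp_all
  | cons e1 e2 rest hm hr ih =>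
    simp only [List.nodup_cons, List.mem_cons, not_or] at hn
    obtain ⟨P, hP, hPm⟩ := ih hn.2.2 (by
      intro e he hi
      obtain ⟨e', he', hm'⟩ := hc e (by simp [he]) hi
      simp only [List.mem_cons] at he'
      rcases he' with rfl | rfl | he'
      · have h1 := hm.1
        have h2 := hm'.2.1
        simp_all
      · have := hm.inj_left hm'
        subst this
        exact absurd he hn.1.2
      · exact ⟨e', he', hm'⟩)
    refine ⟨(e1, e2) :: P, by simp [pairEv, hP], ?_⟩
    simpa [hm] using fun a b h => hPm (a, b) h

theorem seq_order {α : Type*} [LinearOrder α] (T : Event → α) {l : Hist} (hs : IsSequential l)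
    (hp : l.Pairwise (fun a b => T a < T b)) {a b a' b' : Event} (ha : a ∈ l) (hb : b ∈ l)
    (ha' : a' ∈ l) (hb' : b' ∈ l) (hm : Matches a b) (hm' : Matches a' b') (hne : a ≠ a') :
    T b < T a' ∨ T b' < T a := by
  induction hs with
  | nil => simp at ha
  | single e he =>
    simp at ha hb
    have h1 := hm.1
    have h2 := hm.2.1
    simp_all
  | cons e1 e2 rest hme hr ih =>
    have hn : (e1 :: e2 :: rest).Nodup := hp.imp (fun h => by rintro rfl; exact lt_irrefl _ h)
    have key : ∀ a b, a ∈ e1 :: e2 :: rest → b ∈ e1 :: e2 :: rest → Matches a b →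
        (a = e1 ∧ b = e2) ∨ (a ∈ rest ∧ b ∈ rest) := by
      intro u v hu hv hm
      simp only [List.nodup_cons, List.mem_cons, not_or] at hu hv hn
      have h1 := hm.1
      have h2 := hm.2.1
      have h3 := hme.1
      have h4 := hme.2.1
      rcases hu with hu | hu | hu
      · subst hu
        exact Or.inl ⟨rfl, hm.inj_right hme⟩
      · simp_all
      · rcases hv with hv | hv | hv
        · simp_all
        · rw [hv] at hm
          have := hm.inj_left hme
          rw [this] at hu
          exact absurd hu hn.1.2
        · exact Or.inr ⟨hu, hv⟩
    simp only [List.pairwise_cons] at hp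
    rcases key a b ha hb hm with ⟨rfl, rfl⟩ | ⟨h1, h2⟩
    · rcases key a' b' ha' hb' hm' with ⟨rfl, rfl⟩ | ⟨h3, h4⟩
      · exact absurd rfl hne
      · exact Or.inl (hp.2.1 _ h3)
    · rcases key a' b' ha' hb' hm' with ⟨rfl, rfl⟩ | ⟨h3, h4⟩
      · exact Or.inr (hp.2.1 _ h1)
      · exact ih hp.2.2 h1 h2 h3 h4

/-- Assign linearization points to a list of operations. -/
theorem exists_points {α : Type*} [LinearOrder α] (T : Event → α) (P : List (Event × Event))
    (m0 : α) (h0 : ∀ t ∈ P, m0 < T t.2) (h1 : ∀ t ∈ P, T t.1 < T t.2)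
    (h2 : P.Pairwise (fun t t' => T t.1 < T t'.2)) :
    ∃ Q : List (α × (Event × Event)), Q.map Prod.snd = P ∧
      Q.Pairwise (fun q q' => q.1 ≤ q'.1) ∧
      ∀ q ∈ Q, m0 ≤ q.1 ∧ T q.2.1 ≤ q.1 ∧ q.1 < T q.2.2 := by
  induction P generalizing m0 with
  | nil => exact ⟨[], by simp⟩
  | cons t P ih =>
    rw [List.pairwise_cons] at h2
    obtain ⟨Q, hQ, hQ1, hQ2⟩ := ih (max m0 (T t.1))
      (fun t' ht' => max_lt (h0 t' (by simp [ht'])) (h2.1 t' ht'))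
      (fun t' ht' => h1 t' (by simp [ht'])) h2.2
    refine ⟨(max m0 (T t.1), t) :: Q, by simp [hQ], ?_, ?_⟩
    · rw [List.pairwise_cons]
      exact ⟨fun q hq => (hQ2 q hq).1, hQ1⟩
    · intro q hq
      rw [List.mem_cons] at hq
      rcases hq with rfl | hq
      · exact ⟨le_max_left _ _, le_max_right _ _, max_lt (h0 t (by simp)) (h1 t (by simp))⟩
      · exact ⟨(le_max_left _ _).trans (hQ2 q hq).1, (hQ2 q hq).2⟩

theorem filter_flatMap_pair {α : Type*} (q : Event → Bool) (G : List (α × (Event × Event)))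
    (h : ∀ t ∈ G, q t.2.1 = q t.2.2) :
    (G.flatMap (fun t => pairEv t.2)).filter q =
      (G.filter (fun t => q t.2.1)).flatMap (fun t => pairEv t.2) := by
  induction G with
  | nil => simp
  | cons t G ih =>
    have h1 := h t (by simp)
    have h2 := ih (fun t' ht' => h t' (by simp [ht']))
    rw [List.flatMap_cons, List.filter_append, h2, List.filter_cons]
    by_cases hq : q t.2.1 = true
    · simp [pairEv, hq, ← h1]
    · simp [pairEv, hq, ← h1]

theorem filter_flatMap_key {β : Type*} (r : β → ℕ) (Q : ℕ → List β) (hQ : ∀ x, ∀ t ∈ Q x, r t = x)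
    (R : List ℕ) (hR : R.Nodup) (x : ℕ) :
    (R.flatMap Q).filter (fun t => r t = x) = if x ∈ R then Q x else [] := by
  induction R with
  | nil => simp
  | cons y R ih =>
    rw [List.nodup_cons] at hR
    rw [List.flatMap_cons, List.filter_append, ih hR.2]
    by_cases hxy : x = y
    · subst hxy
      have : (Q x).filter (fun t => r t = x) = Q x := by
        rw [List.filter_eq_self]
        intro t ht
        simp [hQ x t ht]
      simp [this, hR.1]
    · have : (Q y).filter (fun t => r t = x) = [] := by
        rw [List.filter_eq_nil_iff]
        intro t ht
        simp [hQ y t ht, Ne.symm hxy]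
      simp [this, hxy]

theorem lin_pairwise {α : Type*} [LinearOrder α] (T : Event → α) {L S : Hist}
    (hL : L.Pairwise (fun a b => T a < T b)) (hu : UniqueEvents S) (hp : S.Perm L)
    (ho : ∀ o1 o2 : ℕ, OpBefore L o1 o2 → OpBefore S o1 o2) :
    S.Pairwise (fun a b => a.isInv = true → b.isInv = false → T a < T b) := by
  rw [List.pairwise_iff_getElem]
  intro i j hi hj hij ha hb
  by_contra hcon
  have hle : T S[j] ≤ T S[i] := not_lt.1 hcon
  obtain ⟨i', hi', hie⟩ := List.mem_iff_getElem.1 (hp.mem_iff.1 (List.getElem_mem hi))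
  obtain ⟨j', hj', hje⟩ := List.mem_iff_getElem.1 (hp.mem_iff.1 (List.getElem_mem hj))
  have hji : j' < i' := by
    rcases lt_trichotomy j' i' with h | h | h
    · exact h
    · subst h
      rw [hie] at hje
      rw [hje] at ha
      simp_all
    · have := List.pairwise_iff_getElem.1 hL i' j' hi' hj' h
      rw [hie, hje] at this
      exact absurd this hcon
  have huq : ∀ (m n : ℕ) (hm : m < S.length) (hn : n < S.length), S[m].op = S[n].op →
      S[m].isInv = S[n].isInv → m = n := by
    intro m n hm hn h1 h2
    rcases lt_trichotomy m n with h | h | h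
    · exact absurd ⟨h1, h2⟩ (List.pairwise_iff_getElem.1 hu m n hm hn h)
    · exact h
    · exact absurd ⟨h1.symm, h2.symm⟩ (List.pairwise_iff_getElem.1 hu n m hn hm h)
  obtain ⟨⟨m, hm⟩, ⟨n, hn⟩, hmn, e1, e2, e3, e4⟩ := ho S[j].op S[i].op
    ⟨⟨j', hj'⟩, ⟨i', hi'⟩, hji, by simp [hje], by simp [hje, hb], by simp [hie], by simp [hie, ha]⟩
  simp only [List.get_eq_getElem, Fin.lt_def] at *
  have := huq m j hm hj e1 (by rw [e2, hb])
  have := huq n i hn hi e3 (by rw [e4, ha])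
  omega

theorem eq_of_perm_sorted {α : Type*} [LinearOrder α] (T : Event → α) {L S : Hist}
    (hL : L.Pairwise (fun a b => T a < T b)) (hS : S.Pairwise (fun a b => T a < T b))
    (hp : S.Perm L) : S = L :=
  hp.eq_of_pairwise (fun _ _ _ _ h1 h2 => absurd h1 (lt_asymm h2)) hS hL

theorem reg_points {α : Type*} [LinearOrder α] [OrderBot α] (T : Event → α) {L : Hist}
    (hL : L.Pairwise (fun a b => T a < T b)) (hu : UniqueEvents L) (hc : Complete L)
    (hlin : LIN L) :
    ∃ Q : List (α × (Event × Event)), Q.Pairwise (fun q q' => q.1 ≤ q'.1) ∧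
      (∀ q ∈ Q, Matches q.2.1 q.2.2 ∧ T q.2.1 ≤ q.1 ∧ q.1 < T q.2.2) ∧
      (Q.flatMap (fun t => pairEv t.2)).Perm L ∧ Legal (Q.flatMap (fun t => pairEv t.2)) := by
  obtain ⟨S, hs, hleg, heq, ho⟩ := hlin
  have hp : S.Perm L := perm_of_procSub (fun p => by rw [heq p])
  have huS : UniqueEvents S :=
    (hp.pairwise_iff (fun {a b} h h' => h ⟨h'.1.symm, h'.2.symm⟩)).2 hu
  have hn : S.Nodup := huS.imp (fun h => by rintro rfl; exact h ⟨rfl, rfl⟩)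
  have hcS : Complete S := by
    intro e he hi
    obtain ⟨e', he', hm⟩ := hc e (hp.mem_iff.1 he) hi
    exact ⟨e', hp.mem_iff.2 he', hm⟩
  obtain ⟨P, rfl, hPm⟩ := pairs_of_sequential hs hn hcS
  have hpw := lin_pairwise T hL huS hp ho
  rw [List.pairwise_flatMap] at hpw
  have h1 : ∀ t ∈ P, T t.1 < T t.2 := by
    intro t ht
    have := hpw.1 t ht
    simp only [pairEv, List.pairwise_cons] at this
    exact this.1 t.2 (by simp) (hPm t ht).1 (hPm t ht).2.1
  have h2 : P.Pairwise (fun t t' => T t.1 < T t'.2) := by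
    refine hpw.2.imp_of_mem ?_
    intro t t' ht ht' h
    exact h t.1 (by simp [pairEv]) t'.2 (by simp [pairEv]) (hPm t ht).1 (hPm t' ht').2.1
  obtain ⟨Q, rfl, hQ1, hQ2⟩ := exists_points T P ⊥
    (fun t ht => lt_of_le_of_lt bot_le (h1 t ht)) h1 h2
  rw [List.flatMap_map] at hp hleg
  exact ⟨Q, hQ1, fun q hq => ⟨hPm _ (List.mem_map_of_mem hq), (hQ2 q hq).2⟩, hp, hleg⟩

theorem sequential_flatMap {α : Type*} (G : List (α × (Event × Event)))
    (h : ∀ t ∈ G, Matches t.2.1 t.2.2) : IsSequential (G.flatMap (fun t => pairEv t.2)) := by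
  induction G with
  | nil => exact IsSequential.nil
  | cons t G ih =>
    exact IsSequential.cons _ _ _ (h t (by simp)) (ih (fun t' ht' => h t' (by simp [ht'])))

theorem sc_core {α : Type*} [LinearOrder α] [OrderBot α] (T : Event → α) (H L : Hist)
    (hwf : WellFormed H) (hcom : Complete H) (hp : L.Perm H)
    (hL : L.Pairwise (fun a b => T a < T b))
    (hH : ∀ p, (procSub H p).Pairwise (fun a b => T a < T b))
    (hlin : ∀ x : ℕ, LIN (regSub L x)) : SC H := by
  have hu : UniqueEvents L :=
    (hp.pairwise_iff (fun {a b} h h' => h ⟨h'.1.symm, h'.2.symm⟩)).2 hwf.1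
  have hn : L.Nodup := hu.imp (fun h => by rintro rfl; exact h ⟨rfl, rfl⟩)
  have hreg : ∀ x, ∃ Q : List (α × (Event × Event)), Q.Pairwise (fun q q' => q.1 ≤ q'.1) ∧
      (∀ q ∈ Q, Matches q.2.1 q.2.2 ∧ T q.2.1 ≤ q.1 ∧ q.1 < T q.2.2) ∧
      (Q.flatMap (fun t => pairEv t.2)).Perm (regSub L x) ∧
      Legal (Q.flatMap (fun t => pairEv t.2)) := by
    intro x
    refine reg_points T (hL.sublist List.filter_sublist) (hu.sublist List.filter_sublist) ?_ (hlin x)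
    intro e he hi
    simp only [regSub, List.mem_filter, decide_eq_true_eq] at he
    obtain ⟨e', he', hm⟩ := hcom e (hp.mem_iff.1 he.1) hi
    refine ⟨e', ?_, hm⟩
    simp only [regSub, List.mem_filter, decide_eq_true_eq]
    exact ⟨hp.mem_iff.2 he', by rw [← hm.2.2.2.2.1, he.2]⟩
  choose Q hQ1 hQ2 hQ3 hQ4 using hreg
  have hQr : ∀ x, ∀ t ∈ Q x, t.2.1.reg = x := by
    intro x t ht
    have : t.2.1 ∈ regSub L x :=
      (hQ3 x).mem_iff.1 (List.mem_flatMap.2 ⟨t, ht, by simp [pairEv]⟩)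
    simp only [regSub, List.mem_filter, decide_eq_true_eq] at this
    exact this.2
  let R : List ℕ := (L.map Event.reg).dedup
  have hR : R.Nodup := List.nodup_dedup _
  have hQnil : ∀ x, x ∉ R → Q x = [] := by
    intro x hx
    rw [List.eq_nil_iff_forall_not_mem]
    intro t ht
    apply hx
    have : t.2.1 ∈ regSub L x :=
      (hQ3 x).mem_iff.1 (List.mem_flatMap.2 ⟨t, ht, by simp [pairEv]⟩)
    simp only [regSub, List.mem_filter, decide_eq_true_eq] at this
    simp only [R, List.mem_dedup, List.mem_map]
    exact ⟨_, this⟩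
  let A := R.flatMap Q
  have hA : ∀ x, A.filter (fun t => t.2.1.reg = x) = Q x := by
    intro x
    have := filter_flatMap_key (fun t : α × (Event × Event) => t.2.1.reg) Q hQr R hR x
    by_cases hx : x ∈ R
    · simpa [hx] using this
    · rw [if_neg hx] at this
      rw [hQnil x hx]
      exact this
  let le : (α × (Event × Event)) → (α × (Event × Event)) → Bool := fun t t' => decide (t.1 ≤ t'.1)
  have hletr : ∀ a b c, le a b = true → le b c = true → le a c = true := by
    intro a b c h1 h2
    simp only [le, decide_eq_true_eq] at *
    exact h1.trans h2
  have hletot : ∀ a b, (le a b || le b a) = true := by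
    intro a b
    simp only [le, Bool.or_eq_true, decide_eq_true_eq]
    exact le_total _ _
  let G := A.mergeSort le
  have hGA : G.Perm A := List.mergeSort_perm A le
  have hGs : G.Pairwise (fun t t' => t.1 ≤ t'.1) :=
    (List.pairwise_mergeSort hletr hletot A).imp (fun h => by simpa [le] using h)
  have hG : ∀ x, G.filter (fun t => t.2.1.reg = x) = Q x := by
    intro x
    have h1 : (Q x).Sublist G := by
      apply List.sublist_mergeSort hletr hletot
      · exact (hQ1 x).imp (fun h => by simpa [le] using h)
      · rw [← hA x]; exact List.filter_sublist
    have h2 := h1.filter (fun t => t.2.1.reg = x)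
    rw [List.filter_eq_self.2 (fun t ht => by simp [hQr x t ht])] at h2
    refine (h2.eq_of_length ?_).symm
    rw [(hGA.filter _).length_eq, hA]
  have hGm : ∀ t ∈ G, Matches t.2.1 t.2.2 ∧ T t.2.1 ≤ t.1 ∧ t.1 < T t.2.2 := by
    intro t ht
    have : t ∈ Q t.2.1.reg := by
      rw [← hG]; simp [ht]
    exact hQ2 _ t this
  let S : Hist := G.flatMap (fun t => pairEv t.2)
  have hSreg : ∀ x, regSub S x = (Q x).flatMap (fun t => pairEv t.2) := by
    intro x
    have := filter_flatMap_pair (fun e => decide (e.reg = x)) G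
      (fun t ht => by simp only [(hGm t ht).1.2.2.2.2.1])
    rw [hG] at this
    exact this
  have hSL : S.Perm L := perm_of_regSub (fun x => by rw [hSreg]; exact hQ3 x)
  have hSH : S.Perm H := hSL.trans hp
  have hSn : S.Nodup := hSL.nodup_iff.2 hn
  refine ⟨S, sequential_flatMap G (fun t ht => (hGm t ht).1),
    legal_of_regSub (fun x => by rw [hSreg]; exact hQ4 x), ?_⟩
  intro p
  refine eq_of_perm_sorted T (hH p) ?_ (hSH.filter _)
  have hSp : procSub S p = (G.filter (fun t => t.2.1.proc = p)).flatMap (fun t => pairEv t.2) :=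
    filter_flatMap_pair (fun e => decide (e.proc = p)) G
      (fun t ht => by simp only [(hGm t ht).1.2.2.2.1])
  rw [hSp, List.pairwise_flatMap]
  have hSn' := (List.pairwise_flatMap.1 hSn).2
  constructor
  · intro t ht
    have := hGm t (List.mem_filter.1 ht).1
    simpa [pairEv] using this.2.1.trans_lt this.2.2
  · have hcomb := (hGs.and hSn').sublist
      (List.filter_sublist (p := fun t => decide (t.2.1.proc = p)))
    refine hcomb.imp_of_mem ?_
    rintro t t' ht ht' ⟨hle, hne⟩
    have hmem : ∀ t ∈ G.filter (fun t => t.2.1.proc = p),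
        t.2.1 ∈ procSub H p ∧ t.2.2 ∈ procSub H p := by
      intro t ht
      have e : ∀ e ∈ pairEv t.2, e ∈ procSub H p := by
        intro e he
        refine (hSH.filter _).mem_iff.1 (?_ : e ∈ procSub S p)
        rw [hSp]
        exact List.mem_flatMap.2 ⟨t, ht, he⟩
      exact ⟨e _ (by simp [pairEv]), e _ (by simp [pairEv])⟩
    have g := hGm t (List.mem_filter.1 ht).1
    have g' := hGm t' (List.mem_filter.1 ht').1
    have hlt : T t.2.2 < T t'.2.1 := by
      rcases seq_order T (hwf.2.2 p) (hH p) (hmem t ht).1 (hmem t ht).2 (hmem t' ht').1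
        (hmem t' ht').2 g.1 g'.1 (hne _ (by simp [pairEv]) _ (by simp [pairEv])) with h | h
      · exact h
      · exact absurd (g'.2.2.trans (h.trans_le g.2.1)) (not_lt.2 hle)
    have l1 := g.2.1.trans_lt g.2.2
    have l2 := g'.2.1.trans_lt g'.2.2
    intro x hx y hy
    simp only [pairEv, List.mem_cons, List.not_mem_nil, or_false] at hx hy
    rcases hx with rfl | rfl <;> rcases hy with rfl | rfl
    · exact l1.trans hlt
    · exact (l1.trans hlt).trans l2
    · exact hlt
    · exact hlt.trans l2

/-- Let `H` be a well-formed complete history with a logical-time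
key assignment `lt` as above, and let `H^lt` be the sequence of the same
events sorted in increasing lexicographic key order.  If for every register
`x` the register subhistory `H^lt|x` is linearizable, then `H` is sequentially
consistent. -/
theorem lt_lin_compositional_implies_sc (H : Hist)
    (hwf : WellFormed H) (hcom : Complete H)
    (lt : Event → ℕ × ℕ)
    (hproc : ∀ e ∈ H, (lt e).2 = e.proc)
    (hdist : H.Pairwise (fun e1 e2 => lt e1 ≠ lt e2))
    (hmono : ∀ p : ℕ, (procSub H p).Pairwise (fun e1 e2 => (lt e1).1 < (lt e2).1))
    (Hlt : Hist) (hlt : IsLtHistory H lt Hlt)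
    (hlin : ∀ x : ℕ, LIN (regSub Hlt x)) :
    SC H := by
  refine sc_core (α := ℕ ×ₗ ℕ) (fun e => toLex (lt e)) H Hlt hwf hcom hlt.1 ?_ ?_ hlin
  · exact hlt.2
  · intro p
    exact (hmono p).imp (fun h => Prod.Lex.toLex_lt_toLex.2 (Or.inl h))
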